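/- arXiv:1705.00928 — 10 statements merged into one kernel-verified Lean document; each statement's English description precedes it below -/
import Mathlib

section
/- For any finite simple graph G of order n, the super domination number of G is at least n minus the matching number of G: γ_sp(G) ≥ n − α'(G). -/
/-!
If `D` is super dominating, choose for each `u ∉ D` a vertex `f u ∈ D` whose only neighbour
outside `D` is `u`. The edges `{u, f u}` form a matching: `f` is injective, since `f u`
determines `u`, and its values lie in `D` while the vertices `u` do not. Hence `n - |D| ≤ α'(G)`
for every super dominating set `D`, in particular for a minimum one.
-/

open SimpleGraph

/-- `D` is a super dominating set of `G`: every vertex outside `D` has a private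
neighbour in `D` with respect to the complement of `D`. -/
def IsSuperDominatingSet {V : Type*} (G : SimpleGraph V) (D : Set V) : Prop :=
  ∀ u ∈ Dᶜ, ∃ v ∈ D, G.neighborSet v ∩ Dᶜ = {u}

/-- The super domination number of `G`. -/
noncomputable def superDomNum {V : Type*} (G : SimpleGraph V) : ℕ :=
  sInf {k | ∃ D : Set V, IsSuperDominatingSet G D ∧ D.ncard = k}

/-- `M` is a matching of `G`: a set of edges of `G`, no two of which share a vertex. -/
def IsMatchingSet {V : Type*} (G : SimpleGraph V) (M : Set (Sym2 V)) : Prop :=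
  M ⊆ G.edgeSet ∧ ∀ e ∈ M, ∀ f ∈ M, e ≠ f → ∀ v : V, v ∈ e → v ∉ f

/-- The matching number of `G`. -/
noncomputable def matchingNum {V : Type*} (G : SimpleGraph V) : ℕ :=
  sSup {k | ∃ M : Set (Sym2 V), IsMatchingSet G M ∧ M.ncard = k}

theorem IsMatchingSet.ncard_le_matchingNum {V : Type*} [Fintype V] {G : SimpleGraph V}
    {M : Set (Sym2 V)} (hM : IsMatchingSet G M) : M.ncard ≤ matchingNum G := by
  -- The set of sizes must be bounded above for its supremum not to be the junk value `0`.
  refine le_csSup ⟨Nat.card (Sym2 V), ?_⟩ ⟨M, hM, rfl⟩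
  rintro k ⟨N, -, rfl⟩
  exact Set.ncard_le_card N

/-- The complement of a super dominating set is matched into the set by private neighbours. -/
theorem IsSuperDominatingSet.ncard_compl_le_matchingNum {V : Type*} [Fintype V]
    {G : SimpleGraph V} {D : Set V} (hD : IsSuperDominatingSet G D) :
    Dᶜ.ncard ≤ matchingNum G := by
  classical
  choose! f hfD hf using hD
  have hadj : ∀ u ∈ Dᶜ, G.Adj (f u) u := fun u hu => by
    have h : u ∈ G.neighborSet (f u) ∩ Dᶜ := by rw [hf u hu]; rfl
    exact h.1
  have hinj : ∀ u ∈ Dᶜ, ∀ w ∈ Dᶜ, f u = f w → u = w := fun u hu w hw h => by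
    have h' := hf u hu
    rw [h, hf w hw] at h'
    exact (Set.singleton_injective h').symm
  -- Two of the edges sharing a vertex have the same endpoint outside `D`.
  have hshare : ∀ u ∈ Dᶜ, ∀ w ∈ Dᶜ, ∀ v, v ∈ s(u, f u) → v ∈ s(w, f w) → u = w := by
    intro u hu w hw v h₁ h₂
    rw [Sym2.mem_iff] at h₁ h₂
    rcases h₁ with rfl | rfl <;> rcases h₂ with h | h
    · exact h
    · exact absurd (h ▸ hfD w hw) hu
    · exact absurd (h ▸ hfD u hu) hw
    · exact hinj u hu w hw h
  have hcard : ((fun u => s(u, f u)) '' Dᶜ).ncard = Dᶜ.ncard := by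
    refine Set.InjOn.ncard_image fun u hu w hw h => ?_
    have h' : s(u, f u) = s(w, f w) := h
    exact hshare u hu w hw u (Sym2.mem_mk_left _ _) (h' ▸ Sym2.mem_mk_left _ _)
  rw [← hcard]
  apply IsMatchingSet.ncard_le_matchingNum
  constructor
  · rintro _ ⟨u, hu, rfl⟩
    exact (hadj u hu).symm
  · rintro _ ⟨u, hu, rfl⟩ _ ⟨w, hw, rfl⟩ hne v h₁ h₂
    obtain rfl := hshare u hu w hw v h₁ h₂
    exact hne rfl

theorem superDomNum_ge_card_sub_matchingNum {V : Type*} [Fintype V] (G : SimpleGraph V) :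
    Fintype.card V - matchingNum G ≤ superDomNum G := by
  -- The whole vertex set is super dominating, so the infimum is attained.
  have hne : {k | ∃ D : Set V, IsSuperDominatingSet G D ∧ D.ncard = k}.Nonempty :=
    ⟨_, Set.univ, fun u hu => absurd (Set.mem_univ u) hu, rfl⟩
  obtain ⟨D, hD, hk⟩ := Nat.sInf_mem hne
  have h := hD.ncard_compl_le_matchingNum
  have h' := Set.ncard_add_ncard_compl D
  rw [Nat.card_eq_fintype_card] at h'
  change D.ncard = superDomNum G at hk
  omega
end

section
/- For any finite bipartite simple graph G, the super domination number of G is at least the independence number of G: γ_sp(G) ≥ α(G). -/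
/-!
Let `D` be super dominating and `X` independent. Sending each `u ∉ D` to a vertex `f u ∈ D` whose
only neighbour outside `D` is `u` gives a matching of `Dᶜ` into `D`, since `f u` determines `u`.
An independent set contains at most one end of each matching edge, so replacing every `u ∈ X \ D`
by `f u` maps `X` injectively into `D`, and `|X| ≤ |D|`.
-/

open SimpleGraph

/-- `X` is an independent set of `G`: no two vertices of `X` are adjacent. -/
def IsIndepSet' {V : Type*} (G : SimpleGraph V) (X : Set V) : Prop :=
  ∀ u ∈ X, ∀ v ∈ X, ¬ G.Adj u v

/-- The independence number of `G`. -/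
noncomputable def indepNum' {V : Type*} (G : SimpleGraph V) : ℕ :=
  sSup {k | ∃ X : Set V, IsIndepSet' G X ∧ X.ncard = k}

/-- `G` is bipartite: its vertex set can be partitioned into two independent sets. -/
def IsBipartite' {V : Type*} (G : SimpleGraph V) : Prop :=
  ∃ A : Set V, IsIndepSet' G A ∧ IsIndepSet' G Aᶜ

theorem IsIndepSet'.ncard_le {V : Type*} [Finite V] {G : SimpleGraph V} {X D : Set V}
    (hX : IsIndepSet' G X) (hD : IsSuperDominatingSet G D) : X.ncard ≤ D.ncard := by
  classical
  choose! f hfD hf using hD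
  have hadj : ∀ u ∉ D, G.Adj (f u) u := fun u hu =>
    (show u ∈ G.neighborSet (f u) ∩ Dᶜ by rw [hf u hu]; rfl).1
  refine Set.ncard_le_ncard_of_injOn (fun x => if x ∈ D then x else f x) ?_ ?_
  · intro x _
    by_cases hx : x ∈ D
    · simp [hx]
    · simpa [hx] using hfD x hx
  · intro x hx y hy hxy
    by_cases hxD : x ∈ D <;> by_cases hyD : y ∈ D <;> simp only [hxD, hyD, if_true, if_false] at hxy
    · exact hxy
    · exact absurd (hxy ▸ hadj y hyD) (hX x hx y hy)
    · exact absurd (hxy ▸ hadj x hxD) (hX y hy x hx)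
    · have h := hf x hxD
      rw [hxy, hf y hyD] at h
      exact (Set.singleton_injective h).symm

theorem superDomNum_ge_indepNum {V : Type*} [Fintype V] (G : SimpleGraph V)
    (hG : IsBipartite' G) :
    indepNum' G ≤ superDomNum G := by
  -- Both index sets are nonempty, so neither `sSup` nor `sInf` takes its default value.
  refine csSup_le ⟨_, ∅, fun u hu => hu.elim, rfl⟩ ?_
  rintro _ ⟨X, hX, rfl⟩
  refine le_csInf ⟨_, Set.univ, fun u hu => absurd (Set.mem_univ u) hu, rfl⟩ ?_
  rintro _ ⟨D, hD, rfl⟩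
  exact hX.ncard_le hD
end

section
/- For any finite simple graph G, the super domination number of G is at least the secure domination number of G: γ_sp(G) ≥ γ_s(G). -/
/-!
Every super dominating set `D` is itself secure dominating. Each `u ∉ D` has a neighbour `u' ∈ D`
whose only neighbour outside `D` is `u`. Swapping `u'` for `u` keeps domination: `u'` is dominated
by `u`, and any other `w ∉ D` is dominated by its own private neighbour `w' ∈ D`, which differs
from `u'` because `u'` is not adjacent to `w`.
-/

open SimpleGraph

/-- `S` is a dominating set of `G`: every vertex outside `S` has a neighbour in `S`. -/
def IsDomSet {V : Type*} (G : SimpleGraph V) (S : Set V) : Prop :=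
  ∀ v ∈ Sᶜ, ∃ u ∈ S, G.Adj v u

/-- The domination number of `G`. -/
noncomputable def domNum {V : Type*} (G : SimpleGraph V) : ℕ :=
  sInf {k | ∃ S : Set V, IsDomSet G S ∧ S.ncard = k}

/-- `S` is a secure dominating set of `G`. -/
def IsSecureDomSet {V : Type*} (G : SimpleGraph V) (S : Set V) : Prop :=
  IsDomSet G S ∧ ∀ v ∈ Sᶜ, ∃ u ∈ G.neighborSet v ∩ S, IsDomSet G ((S \ {u}) ∪ {v})

/-- The secure domination number of `G`. -/
noncomputable def secureDomNum {V : Type*} (G : SimpleGraph V) : ℕ :=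
  sInf {k | ∃ S : Set V, IsSecureDomSet G S ∧ S.ncard = k}

theorem IsSuperDominatingSet.isSecureDomSet {V : Type*} {G : SimpleGraph V} {D : Set V}
    (hD : IsSuperDominatingSet G D) : IsSecureDomSet G D := by
  have key : ∀ u ∈ Dᶜ, ∃ v ∈ D, G.Adj u v ∧ ∀ w ∈ Dᶜ, G.Adj v w → w = u := by
    intro u hu
    obtain ⟨v, hv, h⟩ := hD u hu
    have huv : u ∈ G.neighborSet v ∩ Dᶜ := h ▸ Set.mem_singleton u
    exact ⟨v, hv, G.adj_symm huv.1, fun w hw hvw => h.subset ⟨hvw, hw⟩⟩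
  refine ⟨fun u hu => ?_, fun u hu => ?_⟩
  · obtain ⟨v, hv, huv, -⟩ := key u hu
    exact ⟨v, hv, huv⟩
  · obtain ⟨v, hv, huv, hpriv⟩ := key u hu
    refine ⟨v, ⟨huv, hv⟩, fun w hw => ?_⟩
    by_cases hwv : w = v
    · exact ⟨u, Or.inr rfl, hwv ▸ G.adj_symm huv⟩
    have hwD : w ∈ Dᶜ := fun h => hw (Or.inl ⟨h, hwv⟩)
    obtain ⟨x, hx, hwx, -⟩ := key w hwD
    refine ⟨x, Or.inl ⟨hx, fun hxv => hw (Or.inr ?_)⟩, hwx⟩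
    exact hpriv w hwD (Set.mem_singleton_iff.mp hxv ▸ G.adj_symm hwx)

theorem superDomNum_ge_secureDomNum {V : Type*} [Fintype V] (G : SimpleGraph V) :
    secureDomNum G ≤ superDomNum G := by
  -- The whole vertex set is super dominating, so the infimum `superDomNum G` is attained.
  have hne : {k | ∃ D : Set V, IsSuperDominatingSet G D ∧ D.ncard = k}.Nonempty :=
    ⟨_, Set.univ, fun u hu => absurd (Set.mem_univ u) hu, rfl⟩
  obtain ⟨D, hD, hcard⟩ := Nat.sInf_mem hne
  exact Nat.sInf_le ⟨D, hD.isSecureDomSet, hcard⟩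
end

section
/- If G is a finite connected simple graph of order n having exactly t twin equivalence classes and t ≥ 3, then the super domination number satisfies γ_sp(G) ≥ n − t + 1. -/
/-!
Let `C` be the complement of a super dominating set `D`, and for `u ∈ C` let `v u ∈ D` be such that
`N(v u) ∩ C = {u}`. Two distinct vertices of `C` are never twins, since `v u` distinguishes `u`
from the other one; hence `|C| ≤ t`.

Suppose `|C| = t`. Then every vertex `x` is a twin of a unique `r x ∈ C`, and adjacent vertices
have equal or adjacent representatives. The vertices `v u` are also pairwise non-twins, so
`u ↦ r (v u)` is a permutation of `C`. As `r (v u)` and `v u` are twins, the only possible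
neighbour of `r (v u)` in `C` is `u`; thus `C` induces a graph of maximum degree at most one.
Connectedness of `G` passes to `C` through `r`, so `|C| ≤ 2`, against `t ≥ 3`.
Therefore `|C| ≤ t - 1`, which is the claim.
-/

open SimpleGraph

/-- The twin equivalence relation: `x R y` iff `N[x] = N[y]` or `N(x) = N(y)`. -/
def TwinRel {V : Type*} (G : SimpleGraph V) (x y : V) : Prop :=
  G.neighborSet x ∪ {x} = G.neighborSet y ∪ {y} ∨ G.neighborSet x = G.neighborSet y

/-- The number of twin equivalence classes of `G`. -/
noncomputable def numTwinClasses {V : Type*} (G : SimpleGraph V) : ℕ :=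
  (Set.range fun x : V => {y : V | TwinRel G x y}).ncard

/-- Twins have the same neighbours outside themselves, whether they are adjacent or not. -/
lemma TwinRel.adj_iff {V : Type*} {G : SimpleGraph V} {x y z : V} (h : TwinRel G x y)
    (hx : z ≠ x) (hy : z ≠ y) : G.Adj x z ↔ G.Adj y z := by
  rcases h with h | h
  · have := Set.ext_iff.mp h z
    simpa [hx, hy] using this
  · exact Set.ext_iff.mp h z

/-- Equality of classes gives the twin relation by reflexivity alone; transitivity is never needed. -/
lemma twinRel_of_class_eq {V : Type*} {G : SimpleGraph V} {x y : V}
    (h : {z : V | TwinRel G x z} = {z : V | TwinRel G y z}) : TwinRel G x y := by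
  have : y ∈ {z : V | TwinRel G y z} := Or.inr rfl
  rwa [← h] at this

/-- In a connected graph, suppose a set `C` carries a map `r : V → V` with values in `C`, fixing
`C` pointwise and sending adjacent vertices to equal or adjacent ones. If each vertex of `C` has at
most one neighbour in `C`, then `C` has at most two elements. -/
lemma ncard_le_two_of_retract {V : Type*} {G : SimpleGraph V} (hconn : G.Connected) {C : Set V}
    (r : V → V) (hrC : ∀ x, r x ∈ C) (hr : ∀ x ∈ C, r x = x)
    (hadj : ∀ x y, G.Adj x y → r x = r y ∨ G.Adj (r x) (r y))
    (hdeg : ∀ c ∈ C, ∃ u, ∀ w ∈ C, G.Adj c w → w = u) : C.ncard ≤ 2 := by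
  obtain ⟨x₀⟩ := hconn.nonempty
  obtain ⟨c, hcC⟩ : ∃ c, c ∈ C := ⟨r x₀, hrC x₀⟩
  -- The vertices represented by `c` or by a neighbour of `c` are closed under adjacency.
  have key : ∀ y, r y = c ∨ G.Adj (r y) c := by
    intro y
    obtain ⟨p⟩ := hconn.preconnected y c
    induction p with
    | nil => exact Or.inl (hr _ hcC)
    | @cons a b d hab p ih =>
      have hb := ih hcC
      rcases hadj a b hab with h | h
      · rwa [h]
      · rcases hb with hb | hb
        · exact Or.inr (hb ▸ h)
        · obtain ⟨u, hu⟩ := hdeg (r b) (hrC b)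
          exact Or.inl ((hu _ (hrC a) h.symm).trans (hu _ hcC hb).symm)
  obtain ⟨u, hu⟩ := hdeg c hcC
  have hsub : C ⊆ {c, u} := by
    intro w hw
    rcases key w with h | h
    · exact Or.inl ((hr w hw).symm.trans h)
    · rw [hr w hw] at h
      exact Or.inr (hu w hw h.symm)
  calc C.ncard ≤ ({c, u} : Set V).ncard := Set.ncard_le_ncard hsub (Set.toFinite _)
    _ ≤ ({u} : Set V).ncard + 1 := Set.ncard_insert_le _ _
    _ = 2 := by rw [Set.ncard_singleton]

lemma ncard_compl_lt_numTwinClasses {V : Type*} [Fintype V] {G : SimpleGraph V}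
    (hconn : G.Connected) (ht : 3 ≤ numTwinClasses G) {D : Set V}
    (hD : IsSuperDominatingSet G D) : Dᶜ.ncard < numTwinClasses G := by
  classical
  set C := Dᶜ with hC
  set cls : V → Set V := fun x => {y : V | TwinRel G x y} with hcls
  have htw : ∀ {x y}, cls x = cls y → TwinRel G x y := fun h => twinRel_of_class_eq h
  have ht' : numTwinClasses G = (Set.range cls).ncard := rfl
  choose! v hvD hvN using hD
  have hv : ∀ u ∈ C, ∀ w ∈ C, G.Adj (v u) w ↔ w = u := by
    intro u hu w hw
    have := Set.ext_iff.mp (hvN u hu) w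
    exact ⟨fun h => this.1 ⟨h, hw⟩, fun h => (this.2 h).1⟩
  have hne : ∀ u ∈ C, ∀ w ∈ C, v u ≠ w := fun u hu w hw h => hw (h ▸ hvD u hu)
  -- Distinct vertices of `C` lie in distinct classes: `v a` is adjacent to `a` only.
  have hinj : Set.InjOn cls C := by
    intro a ha b hb hab
    have h := (htw hab).adj_iff (hne a ha a ha) (hne a ha b hb)
    have h1 : G.Adj a (v a) := ((hv a ha a ha).2 rfl).symm
    exact ((hv a ha b hb).1 (h.1 h1).symm).symm
  -- The vertices `v a` lie in distinct classes: `a` is adjacent to `v b` only for `b = a`.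
  have hvinj : ∀ a ∈ C, ∀ b ∈ C, cls (v a) = cls (v b) → a = b := by
    intro a ha b hb hab
    have h := (htw hab).adj_iff (hne a ha a ha).symm (hne b hb a ha).symm
    exact (hv b hb a ha).1 (h.1 ((hv a ha a ha).2 rfl))
  have himg : (cls '' C).ncard = C.ncard := hinj.ncard_image
  have hsub : cls '' C ⊆ Set.range cls := Set.image_subset_range _ _
  by_contra! hlt
  have heq : cls '' C = Set.range cls :=
    Set.eq_of_subset_of_ncard_le hsub (by rw [himg, ← ht']; exact hlt) (Set.toFinite _)
  have hrep : ∀ x, ∃ c ∈ C, cls c = cls x := by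
    intro x
    have : cls x ∈ cls '' C := heq ▸ Set.mem_range_self x
    exact this
  choose r hrC hrcls using hrep
  -- An injective self-map of the finite set `C` is onto.
  have hsurj : Set.SurjOn (fun u => r (v u)) C C := by
    have hmaps : Set.MapsTo (fun u => r (v u)) C C := fun u _ => hrC (v u)
    have hrinj : Set.InjOn (fun u => r (v u)) C := fun a ha b hb hab =>
      hvinj a ha b hb ((hrcls (v a)).symm.trans ((congrArg cls hab).trans (hrcls (v b))))
    exact (Set.eq_of_subset_of_ncard_le hmaps.image_subset
      hrinj.ncard_image.ge (Set.toFinite _)).ge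
  refine absurd (ncard_le_two_of_retract hconn r hrC
    (fun x hx => hinj (hrC x) hx (hrcls x)) ?_ ?_) (by omega)
  · intro x y hxy
    by_cases hr : r x = r y
    · exact Or.inl hr
    right
    have hncls : cls x ≠ cls y := fun h =>
      hr (hinj (hrC x) (hrC y) ((hrcls x).trans (h.trans (hrcls y).symm)))
    have hyrx : y ≠ r x := fun h => hncls ((hrcls x).symm.trans (congrArg cls h.symm))
    have h1 : G.Adj (r x) y := ((htw (hrcls x)).adj_iff hyrx hxy.ne').2 hxy
    exact (((htw (hrcls y)).adj_iff hr hyrx.symm).2 h1.symm).symm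
  · intro c hc
    obtain ⟨u, hu, rfl⟩ := hsurj hc
    refine ⟨u, fun w hw hcw => ?_⟩
    exact (hv u hu w hw).1 (((htw (hrcls (v u))).adj_iff hcw.ne' (hne u hu w hw).symm).1 hcw)

theorem superDomNum_ge_card_sub_numTwinClasses_add_one {V : Type*} [Fintype V]
    (G : SimpleGraph V) (hconn : G.Connected) (ht : 3 ≤ numTwinClasses G) :
    Fintype.card V - numTwinClasses G + 1 ≤ superDomNum G := by
  refine le_csInf ⟨_, Set.univ, fun u hu => absurd (Set.mem_univ u) hu, rfl⟩ ?_
  rintro _ ⟨D, hD, rfl⟩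
  have h1 := ncard_compl_lt_numTwinClasses hconn ht hD
  have h2 := Set.ncard_add_ncard_compl D
  -- `t ≤ n`, so the subtraction does not truncate.
  have h3 : numTwinClasses G ≤ Nat.card V := by
    rw [numTwinClasses, ← Set.image_univ, ← Set.ncard_univ]
    exact Set.ncard_image_le (Set.toFinite _)
  rw [Nat.card_eq_fintype_card] at h2 h3
  omega
end

section
/- If a finite simple graph G of order n has no isolated vertices, then the super domination number of G is at most n minus the domination number of G: γ_sp(G) ≤ n − γ(G). -/
/-!
By a theorem of Bollobás and Cockayne, a finite graph without isolated vertices has a minimum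
dominating set `S` in which every vertex `v` has an external private neighbour, that is, a vertex
`w ∉ S` with `N(w) ∩ S = {v}` (`exists_isDomSet_private_neighbor`). This says precisely that the
complement of `S`, which has `n - γ(G)` elements, is super dominating.

To find `S`, minimise the number of isolated vertices of `G[S]` over all minimum dominating sets.
If `v ∈ S` has no external private neighbour, then `v` is isolated in `G[S]`, since otherwise
`S \ {v}` would be dominating. Take any neighbour `w` of `v`. Exchanging `v` for `w` preserves
domination and cardinality, and `w` is not isolated in the new set because it is not a private
neighbour of `v`; so the number of isolated vertices drops, a contradiction.
-/

open SimpleGraph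

/-- The vertices of `S` that are isolated in the subgraph induced by `S`. -/
def isolatedIn {V : Type*} (G : SimpleGraph V) (S : Set V) : Set V :=
  {x ∈ S | ∀ y ∈ S, ¬ G.Adj x y}

theorem domNum_le_ncard {V : Type*} {G : SimpleGraph V} {S : Set V} (hS : IsDomSet G S) :
    domNum G ≤ S.ncard :=
  Nat.sInf_le ⟨S, hS, rfl⟩

theorem superDomNum_le_ncard {V : Type*} {G : SimpleGraph V} {D : Set V}
    (hD : IsSuperDominatingSet G D) : superDomNum G ≤ D.ncard :=
  Nat.sInf_le ⟨D, hD, rfl⟩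

theorem exists_isDomSet_ncard_eq_domNum {V : Type*} (G : SimpleGraph V) :
    ∃ S : Set V, IsDomSet G S ∧ S.ncard = domNum G := by
  have hne : {k | ∃ S : Set V, IsDomSet G S ∧ S.ncard = k}.Nonempty :=
    ⟨_, Set.univ, fun v hv => (hv (Set.mem_univ v)).elim, rfl⟩
  exact Nat.sInf_mem hne

/-- The Bollobás–Cockayne theorem: without isolated vertices, some minimum dominating set has an
external private neighbour for each of its vertices. -/
theorem exists_isDomSet_private_neighbor {V : Type*} [Finite V] (G : SimpleGraph V)
    (h : ∀ v : V, (G.neighborSet v).Nonempty) :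
    ∃ S : Set V, S.ncard = domNum G ∧
      ∀ v ∈ S, ∃ w ∈ Sᶜ, G.neighborSet w ∩ S = {v} := by
  obtain ⟨S, ⟨hS, hcard⟩, hmin⟩ :=
    Set.exists_min_image {S : Set V | IsDomSet G S ∧ S.ncard = domNum G}
      (fun S => (isolatedIn G S).ncard) (Set.toFinite _) (exists_isDomSet_ncard_eq_domNum G)
  refine ⟨S, hcard, fun v hv => ?_⟩
  by_contra! hno
  have hother : ∀ w ∉ S, ∃ u ∈ S, u ≠ v ∧ G.Adj w u := by
    intro w hw
    obtain ⟨u, hu, hwu⟩ := hS w hw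
    by_contra! hall
    refine hno w hw (Set.eq_singleton_iff_unique_mem.2 ⟨⟨?_, hv⟩, fun x hx => ?_⟩)
    · by_cases huv : u = v
      · exact huv ▸ hwu
      · exact (hall u hu huv hwu).elim
    · by_contra hxv
      exact hall x hx.2 hxv hx.1
  have hiso : ∀ y ∈ S, ¬ G.Adj v y := by
    intro y hy hvy
    have hdom : IsDomSet G (S \ {v}) := by
      intro x hx
      by_cases hxv : x = v
      · subst hxv
        exact ⟨y, ⟨hy, hvy.ne'⟩, hvy⟩
      · obtain ⟨u, hu, huv, hxu⟩ := hother x fun hxS => hx ⟨hxS, hxv⟩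
        exact ⟨u, ⟨hu, huv⟩, hxu⟩
    have := domNum_le_ncard hdom
    have := Set.ncard_sdiff_singleton_lt_of_mem hv
    omega
  obtain ⟨w, hvw : G.Adj v w⟩ := h v
  have hwS : w ∉ S := fun hw => hiso w hw hvw
  have hdom : IsDomSet G (insert w (S \ {v})) := by
    intro x hx
    by_cases hxv : x = v
    · subst hxv
      exact ⟨w, Set.mem_insert _ _, hvw⟩
    · obtain ⟨u, hu, huv, hxu⟩ := hother x fun hxS => hx (Or.inr ⟨hxS, hxv⟩)
      exact ⟨u, Or.inr ⟨hu, huv⟩, hxu⟩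
  have hle := hmin _ ⟨hdom, (Set.ncard_exchange hwS hv).trans hcard⟩
  have hlt : isolatedIn G (insert w (S \ {v})) ⊂ isolatedIn G S := by
    refine (Set.ssubset_iff_of_subset ?_).2 ⟨v, ⟨hv, hiso⟩, ?_⟩
    · rintro x ⟨rfl | ⟨hxS, hxv⟩, hx⟩
      · obtain ⟨u, hu, huv, hxu⟩ := hother x hwS
        exact (hx u (Or.inr ⟨hu, huv⟩) hxu).elim
      · refine ⟨hxS, fun y hy hxy => ?_⟩
        by_cases hyv : y = v
        · subst hyv
          exact hiso x hxS hxy.symm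
        · exact hx y (Or.inr ⟨hy, hyv⟩) hxy
    · rintro ⟨rfl | ⟨-, hvv⟩, -⟩
      · exact hwS hv
      · exact hvv rfl
  exact absurd (Set.ncard_lt_ncard hlt (Set.toFinite _)) (not_lt.2 hle)

theorem superDomNum_le_card_sub_domNum {V : Type*} [Fintype V] (G : SimpleGraph V)
    (h : ∀ v : V, (G.neighborSet v).Nonempty) :
    superDomNum G ≤ Fintype.card V - domNum G := by
  obtain ⟨S, hcard, hS⟩ := exists_isDomSet_private_neighbor G h
  have hsuper : IsSuperDominatingSet G Sᶜ := by
    intro u hu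
    rw [compl_compl] at hu ⊢
    exact hS u hu
  have := superDomNum_le_ncard hsuper
  rwa [Set.ncard_compl, Nat.card_eq_fintype_card, hcard] at this
end

section
/- If a finite simple graph G of order n has no isolated vertices, then the super domination number of G is at most n minus the 2-packing number of G: γ_sp(G) ≤ n − ρ(G). -/
/-!
The complement of a 2-packing `X` is super dominating when `G` has no isolated vertices: for
`u ∈ X`, any neighbour `v` of `u` lies outside `X` and has `u` as its only neighbour in `X`, since
otherwise `N[u]` would meet the closed neighbourhood of another vertex of `X` in `v`.
Applying this to a maximum 2-packing gives a super dominating set with `n - ρ(G)` vertices.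
-/

open SimpleGraph

/-- `X` is a 2-packing of `G`: closed neighbourhoods of distinct vertices of `X` are disjoint. -/
def IsTwoPacking {V : Type*} (G : SimpleGraph V) (X : Set V) : Prop :=
  ∀ u ∈ X, ∀ v ∈ X, u ≠ v → (G.neighborSet u ∪ {u}) ∩ (G.neighborSet v ∪ {v}) = ∅

/-- The 2-packing number of `G`. -/
noncomputable def twoPackingNum {V : Type*} (G : SimpleGraph V) : ℕ :=
  sSup {k | ∃ X : Set V, IsTwoPacking G X ∧ X.ncard = k}

theorem IsTwoPacking.isSuperDominatingSet_compl {V : Type*} {G : SimpleGraph V} {X : Set V}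
    (hX : IsTwoPacking G X) (h : ∀ v : V, (G.neighborSet v).Nonempty) :
    IsSuperDominatingSet G Xᶜ := by
  intro u hu
  rw [compl_compl] at hu ⊢
  obtain ⟨v, hv⟩ := h u
  have huv : G.Adj u v := hv
  have key : ∀ w ∈ X, v ∈ G.neighborSet w ∪ {w} → w = u := by
    intro w hw hvw
    by_contra hne
    have hmem : v ∈ (G.neighborSet u ∪ {u}) ∩ (G.neighborSet w ∪ {w}) := ⟨Or.inl huv, hvw⟩
    rw [hX u hu w hw (Ne.symm hne)] at hmem
    exact hmem
  refine ⟨v, fun hvX => huv.ne (key v hvX (Or.inr rfl)).symm, ?_⟩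
  ext w
  constructor
  · rintro ⟨hvw, hw⟩
    exact key w hw (Or.inl (G.adj_symm hvw))
  · rintro rfl
    exact ⟨huv.symm, hu⟩

/-- On a finite vertex set the supremum defining `twoPackingNum` is attained, so it is not the junk
value `0` of an unbounded `sSup`. -/
theorem exists_isTwoPacking_ncard_eq {V : Type*} [Finite V] (G : SimpleGraph V) :
    ∃ X : Set V, IsTwoPacking G X ∧ X.ncard = twoPackingNum G := by
  refine Nat.sSup_mem (s := {k | ∃ X : Set V, IsTwoPacking G X ∧ X.ncard = k}) ?_ ?_
  · exact ⟨_, ∅, by simp [IsTwoPacking], rfl⟩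
  · refine ⟨Nat.card V, ?_⟩
    rintro _ ⟨X, -, rfl⟩
    exact Set.ncard_le_card X

theorem superDomNum_le_card_sub_twoPackingNum {V : Type*} [Fintype V] (G : SimpleGraph V)
    (h : ∀ v : V, (G.neighborSet v).Nonempty) :
    superDomNum G ≤ Fintype.card V - twoPackingNum G := by
  obtain ⟨X, hX, hcard⟩ := exists_isTwoPacking_ncard_eq G
  refine Nat.sInf_le ⟨Xᶜ, hX.isSuperDominatingSet_compl h, ?_⟩
  rw [Set.ncard_compl, hcard, Nat.card_eq_fintype_card]
end

section
/- For any finite simple graph G of order n with no isolated vertices and maximum degree Δ, the super domination number satisfies γ_sp(G) ≤ ⌊nΔ/(Δ + 1)⌋. -/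
/-!
A set `Sᶜ` is super dominating exactly when every `u ∈ S` has an external private neighbour:
some `v ∉ S` whose only neighbour in `S` is `u`. Hence it suffices to find such an `S` with
`n ≤ |S| (Δ + 1)`, and any dominating `S` satisfies this inequality (`card_le_of_isDom`).

A dominating set with external private neighbours is provided by the Bollobás–Cockayne theorem
(`exists_isDom_private`). Among the minimum dominating sets, choose `S` with the fewest isolated
vertices in the induced subgraph `G[S]`. If `u ∈ S` has no external private neighbour, minimality
of `|S|` makes `u` isolated in `G[S]`; exchanging `u` for one of its neighbours `w` gives another
minimum dominating set, and it has fewer isolated vertices because `w`, not being private to `u`,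
has a neighbour in `S \ {u}`.
-/

open SimpleGraph

/-- The maximum degree of `G`. -/
noncomputable def maxDeg {V : Type*} (G : SimpleGraph V) : ℕ :=
  sSup {k | ∃ v : V, (G.neighborSet v).ncard = k}

/-- `S` is a dominating set of `G`: every vertex lies in `S` or is adjacent to a member of `S`. -/
def IsDom {V : Type*} (G : SimpleGraph V) (S : Finset V) : Prop :=
  ∀ x, x ∈ S ∨ ∃ y ∈ S, G.Adj y x

open scoped Classical in
/-- The isolated vertices of the subgraph of `G` induced by `S`. -/
noncomputable def isol {V : Type*} (G : SimpleGraph V) (S : Finset V) : Finset V :=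
  S.filter fun x => ∀ y ∈ S, ¬ G.Adj x y

open scoped Classical in
/-- The bound `n ≤ γ(G) (Δ + 1)`: the closed neighbourhoods of a dominating set cover `V`. -/
lemma card_le_of_isDom {V : Type*} [Fintype V] (G : SimpleGraph V) (S : Finset V)
    (hS : IsDom G S) : Fintype.card V ≤ S.card * (maxDeg G + 1) := by
  have hdeg : ∀ v, (G.neighborSet v).ncard ≤ maxDeg G := fun v =>
    le_csSup ⟨Fintype.card V, by
      rintro k ⟨w, rfl⟩
      rw [← Nat.card_eq_fintype_card]
      exact Set.ncard_le_card _⟩ ⟨v, rfl⟩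
  have hcov : (Finset.univ : Finset V) ⊆
      S.biUnion fun v => insert v (G.neighborSet v).toFinset := by
    intro x _
    rw [Finset.mem_biUnion]
    rcases hS x with hx | ⟨y, hy, hxy⟩
    · exact ⟨x, hx, by simp⟩
    · exact ⟨y, hy, by simp [hxy]⟩
  refine (Finset.card_le_card hcov).trans (Finset.card_biUnion_le_card_mul _ _ _ fun v _ => ?_)
  refine (Finset.card_insert_le _ _).trans ?_
  have := hdeg v
  rw [Set.ncard_eq_toFinset_card'] at this
  omega

open scoped Classical in
/-- Bollobás–Cockayne: without isolated vertices there is a dominating set each of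
whose members has a private neighbour outside the set. -/
lemma exists_isDom_private {V : Type*} [Fintype V] (G : SimpleGraph V)
    (h : ∀ v : V, (G.neighborSet v).Nonempty) :
    ∃ S : Finset V, IsDom G S ∧
      ∀ u ∈ S, ∃ v, v ∉ S ∧ G.Adj v u ∧ ∀ x ∈ S, G.Adj v x → x = u := by
  obtain ⟨S₀, hS₀, hmin₀⟩ := Finset.exists_min_image
    (Finset.univ.filter fun S : Finset V => IsDom G S) Finset.card
    ⟨Finset.univ, Finset.mem_filter.2 ⟨Finset.mem_univ _, fun _ => Or.inl (Finset.mem_univ _)⟩⟩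
  simp only [Finset.mem_filter, Finset.mem_univ, true_and] at hS₀ hmin₀
  obtain ⟨S, hS, hmin⟩ := Finset.exists_min_image
    (Finset.univ.filter fun S : Finset V => IsDom G S ∧ S.card = S₀.card)
    (fun S => (isol G S).card) ⟨S₀, by simp [hS₀]⟩
  simp only [Finset.mem_filter, Finset.mem_univ, true_and] at hS hmin
  obtain ⟨hS, hcard⟩ := hS
  refine ⟨S, hS, fun u hu => ?_⟩
  by_contra! hno
  -- Without an external private neighbour for `u`, the set `S \ {u}` dominates everything
  -- outside `S`.
  have hout : ∀ x, x ∉ S → ∃ y ∈ S.erase u, G.Adj y x := by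
    intro x hx
    rcases hS x with hx' | ⟨y, hy, hyx⟩
    · exact absurd hx' hx
    · by_cases hyu : y = u
      · subst hyu
        obtain ⟨z, hz, hxz, hzy⟩ := hno x hx hyx.symm
        exact ⟨z, Finset.mem_erase.2 ⟨hzy, hz⟩, hxz.symm⟩
      · exact ⟨y, Finset.mem_erase.2 ⟨hyu, hy⟩, hyx⟩
  -- By minimality of the cardinality, `u` must therefore be isolated inside `S`.
  have hiso : ∀ y ∈ S, ¬ G.Adj u y := by
    intro y hy huy
    have hdom : IsDom G (S.erase u) := by
      intro x
      by_cases hx : x ∈ S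
      · by_cases hxu : x = u
        · subst hxu
          exact Or.inr ⟨y, Finset.mem_erase.2 ⟨huy.ne', hy⟩, huy.symm⟩
        · exact Or.inl (Finset.mem_erase.2 ⟨hxu, hx⟩)
      · exact Or.inr (hout x hx)
    have h1 := hmin₀ _ hdom
    have h2 := Finset.card_erase_lt_of_mem hu
    omega
  obtain ⟨w, hw⟩ := h u
  rw [SimpleGraph.mem_neighborSet] at hw
  have hwS : w ∉ S := fun hwS => hiso w hwS hw
  obtain ⟨z, hz, hzw⟩ := hout w hwS
  -- Exchange `u` for its neighbour `w`.
  have hdom : IsDom G (insert w (S.erase u)) := by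
    intro x
    by_cases hx : x ∈ S
    · by_cases hxu : x = u
      · subst hxu
        exact Or.inr ⟨w, by simp, hw.symm⟩
      · exact Or.inl (by simp [hxu, hx])
    · obtain ⟨y, hy, hyx⟩ := hout x hx
      exact Or.inr ⟨y, Finset.mem_insert_of_mem hy, hyx⟩
  have hcard' : (insert w (S.erase u)).card = S₀.card := by
    rw [Finset.card_insert_of_notMem (fun hm => hwS (Finset.mem_of_mem_erase hm)),
      Finset.card_erase_add_one hu, hcard]
  -- `u` is lost as an isolated vertex, while `w` is adjacent to `z ∈ S \ {u}`.
  have hss : isol G (insert w (S.erase u)) ⊂ isol G S := by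
    rw [Finset.ssubset_iff_of_subset]
    · refine ⟨u, by simpa [isol, hu] using hiso, ?_⟩
      simp [isol, hw.ne]
    · intro x hx
      simp only [isol, Finset.mem_filter, Finset.mem_insert, Finset.mem_erase] at hx ⊢
      obtain ⟨rfl | ⟨hxu, hxS⟩, hx⟩ := hx
      · exact absurd hzw.symm (hx z (Or.inr (Finset.mem_erase.1 hz)))
      · refine ⟨hxS, fun y hy hxy => ?_⟩
        by_cases hyu : y = u
        · subst hyu
          exact hiso x hxS hxy.symm
        · exact hx y (Or.inr ⟨hyu, hy⟩) hxy
  exact absurd (hmin _ ⟨hdom, hcard'⟩) (not_le.2 (Finset.card_lt_card hss))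

theorem superDomNum_le_floor_card_mul_maxDeg_div {V : Type*} [Fintype V] (G : SimpleGraph V)
    (h : ∀ v : V, (G.neighborSet v).Nonempty) :
    superDomNum G ≤ Fintype.card V * maxDeg G / (maxDeg G + 1) := by
  obtain ⟨S, hS, hpriv⟩ := exists_isDom_private G h
  have hsd : IsSuperDominatingSet G ((S : Set V)ᶜ) := by
    intro u hu
    rw [compl_compl] at hu ⊢
    obtain ⟨v, hv, hvu, huniq⟩ := hpriv u hu
    refine ⟨v, hv, Set.ext fun x => ⟨fun hx => huniq x hx.2 hx.1, ?_⟩⟩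
    rintro rfl
    exact ⟨hvu, hu⟩
  have hle : superDomNum G ≤ ((S : Set V)ᶜ).ncard := Nat.sInf_le ⟨_, hsd, rfl⟩
  refine hle.trans ?_
  have hn := card_le_of_isDom G S hS
  have hsum := Set.ncard_add_ncard_compl (S : Set V)
  rw [Set.ncard_coe_finset, Nat.card_eq_fintype_card] at hsum
  rw [Nat.le_div_iff_mul_le (Nat.succ_pos _)]
  nlinarith
end

section
/- For any finite simple graph G of order n with at least one edge, the super domination number of G is at most n minus the 2-packing number of the line graph of G: γ_sp(G) ≤ n − ρ(L(G)). -/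
/-!
A 2-packing `X` of the line graph is an induced matching of `G`: an edge of `G` meeting two members
of `X` would lie in both of their closed neighbourhoods (`IsTwoPacking.eq_of_meets`). Orient each
`e ∈ X` as `(a e, b e)` and let `D` be the complement of `{b e | e ∈ X}`. Then `a e ∈ D`, and the only
neighbour of `a e` outside `D` is `b e`, since an edge from `a e` to `b e'` meets both `e` and `e'`.
Hence `D` is super dominating, and `|D| = n - |X|` because `b` is injective on `X`.
-/

open SimpleGraph

/-- No edge `f` of `G` meets two distinct members of a 2-packing of the line graph. -/
lemma IsTwoPacking.eq_of_meets {V : Type*} {G : SimpleGraph V} {X : Set G.edgeSet}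
    (hX : IsTwoPacking G.lineGraph X) {e e' f : G.edgeSet} (he : e ∈ X) (he' : e' ∈ X) {x y : V}
    (hx : x ∈ (e : Sym2 V)) (hxf : x ∈ (f : Sym2 V))
    (hy : y ∈ (e' : Sym2 V)) (hyf : y ∈ (f : Sym2 V)) : e = e' := by
  by_contra hne
  have key : ∀ (g : G.edgeSet) (z : V), z ∈ (g : Sym2 V) → z ∈ (f : Sym2 V) →
      f ∈ G.lineGraph.neighborSet g ∪ {g} := by
    intro g z hg hf
    by_cases hgf : f = g
    · exact Or.inr hgf
    · exact Or.inl (lineGraph_adj_iff_exists.2 ⟨fun h => hgf h.symm, z, hg, hf⟩)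
  have hmem : f ∈ (G.lineGraph.neighborSet e ∪ {e}) ∩ (G.lineGraph.neighborSet e' ∪ {e'}) :=
    ⟨key e x hx hxf, key e' y hy hyf⟩
  rw [hX e he e' he' hne] at hmem
  exact hmem

lemma IsTwoPacking.exists_isSuperDominatingSet {V : Type*} [Fintype V] {G : SimpleGraph V}
    {X : Set G.edgeSet} (hX : IsTwoPacking G.lineGraph X) :
    ∃ D : Set V, IsSuperDominatingSet G D ∧ D.ncard = Fintype.card V - X.ncard := by
  have hends : ∀ e : G.edgeSet, ∃ a b : V, (e : Sym2 V) = s(a, b) ∧ G.Adj a b := by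
    rintro ⟨e, he⟩
    induction e using Sym2.ind with
    | _ a b => exact ⟨a, b, rfl, he⟩
  choose a b hab hadj using hends
  have ha : ∀ e : G.edgeSet, a e ∈ (e : Sym2 V) := fun e => by rw [hab e]; exact Sym2.mem_mk_left _ _
  have hb : ∀ e : G.edgeSet, b e ∈ (e : Sym2 V) := fun e => by rw [hab e]; exact Sym2.mem_mk_right _ _
  refine ⟨(b '' X)ᶜ, ?_, ?_⟩
  · intro u hu
    rw [compl_compl] at hu
    obtain ⟨e, he, rfl⟩ := hu
    refine ⟨a e, ?_, ?_⟩
    · rintro ⟨e', he', h⟩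
      have hee : e = e' :=
        hX.eq_of_meets (f := e') he he' (ha e) (h ▸ hb e') (hb e') (hb e')
      subst hee
      exact (hadj e).ne h.symm
    · rw [compl_compl]
      ext w
      constructor
      · rintro ⟨hw, e', he', rfl⟩
        have hee : e = e' :=
          hX.eq_of_meets (f := ⟨s(a e, b e'), hw⟩) he he' (ha e) (Sym2.mem_mk_left _ _)
            (hb e') (Sym2.mem_mk_right _ _)
        rw [hee]
        rfl
      · rintro rfl
        exact ⟨hadj e, e, he, rfl⟩
  · have hinj : Set.InjOn b X := fun e he e' he' h =>
      hX.eq_of_meets (f := e) he he' (hb e) (hb e) (hb e') (h ▸ hb e)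
    rw [Set.ncard_compl, hinj.ncard_image, Nat.card_eq_fintype_card]

theorem superDomNum_le_card_sub_twoPackingNum_lineGraph {V : Type*} [Fintype V]
    (G : SimpleGraph V) (h : G.edgeSet.Nonempty) :
    superDomNum G ≤ Fintype.card V - twoPackingNum G.lineGraph := by
  -- The cardinalities of 2-packings are bounded, so the supremum is attained.
  have hmax : twoPackingNum G.lineGraph ∈
      {k | ∃ X : Set G.edgeSet, IsTwoPacking G.lineGraph X ∧ X.ncard = k} := by
    refine Nat.sSup_mem ⟨0, ∅, fun u hu => hu.elim, Set.ncard_empty _⟩ ⟨Nat.card G.edgeSet, ?_⟩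
    rintro k ⟨X, -, rfl⟩
    exact Set.ncard_le_card X
  obtain ⟨X, hX, hcard⟩ := hmax
  rw [← hcard]
  exact Nat.sInf_le hX.exists_isSuperDominatingSet
end

section
/- For any finite simple graphs G of order n ≥ 2 and H of order n' ≥ 2, each having at least one edge, the super domination number of the Cartesian product satisfies γ_sp(G □ H) ≤ nn' − n − n' + 4. -/
/-!
Fix an edge `g g'` of `G` and an edge `h h'` of `H`, and remove from the vertex set the cross
`{g} × (V(H) \ {h, h'}) ∪ (V(G) \ {g, g'}) × {h}`, which has `n + n' - 4` vertices. A removed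
vertex `(g, y)` is the only removed neighbour of `(g', y)`, and a removed vertex `(x, h)` is the
only removed neighbour of `(x, h')`, so what remains is a super dominating set.
-/

open SimpleGraph

/-- The set removed from `V × W`: the part of the fibre over `g` off `h, h'`, together with the
part of the fibre over `h` off `g, g'`. -/
def crossSet {V W : Type*} (g g' : V) (h h' : W) : Set (V × W) :=
  {g} ×ˢ {h, h'}ᶜ ∪ {g, g'}ᶜ ×ˢ {h}

lemma isSuperDominatingSet_compl_crossSet {V W : Type*} {G : SimpleGraph V} {H : SimpleGraph W}
    {g g' : V} {h h' : W} (hg : G.Adj g g') (hh : H.Adj h h') :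
    IsSuperDominatingSet (G □ H) (crossSet g g' h h')ᶜ := by
  have hg1 := hg.ne
  have hh1 := hh.ne
  have hg2 := hg.symm
  have hh2 := hh.symm
  rintro ⟨x, y⟩ hu
  rw [compl_compl] at hu ⊢
  simp only [crossSet, Set.mem_union, Set.mem_prod, Set.mem_singleton_iff, Set.mem_compl_iff,
    Set.mem_insert_iff, not_or] at hu
  rcases hu with ⟨rfl, hy, hy'⟩ | ⟨⟨hx, hx'⟩, rfl⟩
  · refine ⟨(g', y), ?_, ?_⟩
    · simp only [crossSet, Set.mem_union, Set.mem_prod, Set.mem_singleton_iff, Set.mem_compl_iff,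
        Set.mem_insert_iff]
      grind
    · ext ⟨a, b⟩
      simp only [crossSet, Set.mem_union, Set.mem_prod, Set.mem_singleton_iff, Set.mem_compl_iff,
        Set.mem_insert_iff, Set.mem_inter_iff, mem_neighborSet, boxProd_adj, Prod.mk.injEq]
      grind
  · refine ⟨(x, h'), ?_, ?_⟩
    · simp only [crossSet, Set.mem_union, Set.mem_prod, Set.mem_singleton_iff, Set.mem_compl_iff,
        Set.mem_insert_iff]
      grind
    · ext ⟨a, b⟩
      simp only [crossSet, Set.mem_union, Set.mem_prod, Set.mem_singleton_iff, Set.mem_compl_iff,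
        Set.mem_insert_iff, Set.mem_inter_iff, mem_neighborSet, boxProd_adj, Prod.mk.injEq]
      grind

lemma ncard_crossSet {V W : Type*} [Fintype V] [Fintype W] {g g' : V} {h h' : W}
    (hg : g ≠ g') (hh : h ≠ h') :
    (crossSet g g' h h').ncard = (Fintype.card W - 2) + (Fintype.card V - 2) := by
  rw [crossSet, Set.ncard_union_eq, Set.ncard_prod, Set.ncard_prod, Set.ncard_compl,
    Set.ncard_compl, Set.ncard_pair hg, Set.ncard_pair hh]
  · simp
  · rw [Set.disjoint_left]
    rintro ⟨a, b⟩ ⟨ha, -⟩ ⟨ha', -⟩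
    exact ha' (Or.inl ha)

theorem superDomNum_boxProd_le {V W : Type*} [Fintype V] [Fintype W]
    (G : SimpleGraph V) (H : SimpleGraph W)
    (hn : 2 ≤ Fintype.card V) (hn' : 2 ≤ Fintype.card W)
    (hG : G.edgeSet.Nonempty) (hH : H.edgeSet.Nonempty) :
    superDomNum (G □ H) ≤
      Fintype.card V * Fintype.card W - Fintype.card V - Fintype.card W + 4 := by
  obtain ⟨⟨g, g'⟩, hg⟩ := hG
  obtain ⟨⟨h, h'⟩, hh⟩ := hH
  have hg : G.Adj g g' := hg
  have hh : H.Adj h h' := hh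
  have key : superDomNum (G □ H) ≤ (crossSet g g' h h')ᶜ.ncard :=
    Nat.sInf_le ⟨_, isSuperDominatingSet_compl_crossSet hg hh, rfl⟩
  refine key.trans ?_
  rw [Set.ncard_compl, ncard_crossSet hg.ne hh.ne, Nat.card_prod, Nat.card_eq_fintype_card,
    Nat.card_eq_fintype_card]
  omega
end

section
/- For any integers n ≥ 4 and n' ≥ 4, the super domination number of the Cartesian product of the complete graphs K_n and K_{n'} is γ_sp(K_n □ K_{n'}) = nn' − n − n' + 4. -/
/-!
Write `C` for the complement of `D`, a set of cells of an `n × n'` grid. A cell `v ∉ C` is a private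
neighbour of `u ∈ C` exactly when either `v` lies in the row of `u`, `u` is the only cell of `C` in
this row and the column of `v` misses `C`, or the same holds with rows and columns exchanged. The
claim is that `C` has at most `n + n' - 4` cells, and that this is attained.

For the bound (`card_add_four_le`), suppose first that every cell of `C` is alone in its row. Then
`|C| ≤ n ≤ n + n' - 4`; likewise for columns. Otherwise some cell `u₁ ∈ C` is not alone in its row,
so it is alone in its column and some row misses `C`; symmetrically some `u₂ ∈ C` is not alone in
its column and some column misses `C`. The cells that are alone in their row occupy distinct rows,
none of which is the missed row or the row of `u₁`: there are at most `n - 2` of them. The remaining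
cells are alone in their column, and their columns differ from each other, from the missed
column and from the column of `u₂`: there are at most `n' - 2` of them.

Equality holds for the hook consisting of the cells `(1, b)` with `b ≥ 2` and `(a, 1)` with `a ≥ 2`,
whose private neighbours are `(0, b)` and `(a, 0)`.
-/

open SimpleGraph

/-- The combinatorial upper bound: `u` being alone in its row (resp. column) within `C` together
with an empty column (resp. row) is what a private neighbour of `u` provides. -/
lemma card_add_four_le {n n' : ℕ} (hn : 4 ≤ n) (hn' : 4 ≤ n') (C : Finset (Fin n × Fin n'))
    (h : ∀ u ∈ C, ((∀ w ∈ C, w.1 = u.1 → w = u) ∧ ∃ c, ∀ w ∈ C, w.2 ≠ c) ∨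
      ((∀ w ∈ C, w.2 = u.2 → w = u) ∧ ∃ r, ∀ w ∈ C, w.1 ≠ r)) :
    C.card + 4 ≤ n + n' := by
  classical
  by_cases hrow : ∀ u ∈ C, ∀ w ∈ C, w.1 = u.1 → w = u
  · have := Finset.card_le_card_of_injOn (s := C) (t := Finset.univ) Prod.fst (by simp)
      (fun a ha b hb hab => hrow b hb a ha hab)
    simp at this
    omega
  by_cases hcol : ∀ u ∈ C, ∀ w ∈ C, w.2 = u.2 → w = u
  · have := Finset.card_le_card_of_injOn (s := C) (t := Finset.univ) Prod.snd (by simp)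
      (fun a ha b hb hab => hcol b hb a ha hab)
    simp at this
    omega
  obtain ⟨u₁, hu₁, hr₁⟩ : ∃ u ∈ C, ¬ ∀ w ∈ C, w.1 = u.1 → w = u := by
    by_contra hc
    exact hrow fun u hu => by_contra fun hu' => hc ⟨u, hu, hu'⟩
  obtain ⟨u₂, hu₂, hc₂⟩ : ∃ u ∈ C, ¬ ∀ w ∈ C, w.2 = u.2 → w = u := by
    by_contra hc
    exact hcol fun u hu => by_contra fun hu' => hc ⟨u, hu, hu'⟩
  obtain ⟨-, r, hr⟩ := (h u₁ hu₁).resolve_left fun h' => hr₁ h'.1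
  obtain ⟨hr₂, c, hc⟩ := (h u₂ hu₂).resolve_right fun h' => hc₂ h'.1
  have hP : (C.filter fun u => ∀ w ∈ C, w.1 = u.1 → w = u).card ≤
      (({r, u₁.1} : Finset (Fin n))ᶜ).card := by
    refine Finset.card_le_card_of_injOn Prod.fst ?_ ?_
    · intro u hu
      obtain ⟨hu, hu'⟩ := Finset.mem_filter.1 hu
      simp only [Finset.coe_compl, Set.mem_compl_iff, Finset.mem_coe, Finset.mem_insert,
        Finset.mem_singleton, not_or]
      refine ⟨hr u hu, fun he => hr₁ ?_⟩
      rwa [hu' u₁ hu₁ he.symm]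
    · intro a ha b hb hab
      exact (Finset.mem_filter.1 hb).2 a (Finset.mem_filter.1 ha).1 hab
  have hQ : (C.filter fun u => ¬ ∀ w ∈ C, w.1 = u.1 → w = u).card ≤
      (({c, u₂.2} : Finset (Fin n'))ᶜ).card := by
    have alone : ∀ u ∈ C.filter fun u => ¬ ∀ w ∈ C, w.1 = u.1 → w = u,
        ∀ w ∈ C, w.2 = u.2 → w = u := by
      intro u hu
      obtain ⟨hu, hu'⟩ := Finset.mem_filter.1 hu
      exact ((h u hu).resolve_left fun h' => hu' h'.1).1
    refine Finset.card_le_card_of_injOn Prod.snd ?_ ?_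
    · intro u hu
      simp only [Finset.coe_compl, Set.mem_compl_iff, Finset.mem_coe, Finset.mem_insert,
        Finset.mem_singleton, not_or]
      refine ⟨hc u (Finset.mem_filter.1 hu).1, fun he => hc₂ ?_⟩
      rw [alone u hu u₂ hu₂ he.symm]
      exact alone u hu
    · intro a ha b hb hab
      exact alone b hb a (Finset.mem_filter.1 ha).1 hab
  rw [Finset.card_compl, Finset.card_pair (hr u₁ hu₁).symm, Fintype.card_fin] at hP
  rw [Finset.card_compl, Finset.card_pair (hc u₂ hu₂).symm, Fintype.card_fin] at hQ
  have := C.card_filter_add_card_filter_not (fun u => ∀ w ∈ C, w.1 = u.1 → w = u)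
  omega

/-- A private neighbour in the rook's graph forces the row/column alternative of
`card_add_four_le`. -/
lemma alone_of_private {n n' : ℕ} {C : Set (Fin n × Fin n')} {u v : Fin n × Fin n'}
    (hv : v ∉ C) (h : ((⊤ : SimpleGraph (Fin n)) □ (⊤ : SimpleGraph (Fin n'))).neighborSet v ∩ C
      = {u}) :
    ((∀ w ∈ C, w.1 = u.1 → w = u) ∧ ∃ c, ∀ w ∈ C, w.2 ≠ c) ∨
      ((∀ w ∈ C, w.2 = u.2 → w = u) ∧ ∃ r, ∀ w ∈ C, w.1 ≠ r) := by
  have key : ∀ w ∈ C, w.1 = v.1 ∨ w.2 = v.2 → w = u := by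
    intro w hw hwv
    have hne : w ≠ v := fun e => hv (e ▸ hw)
    have : w ∈ ({u} : Set _) := by
      rw [← h]
      refine ⟨?_, hw⟩
      rw [SimpleGraph.mem_neighborSet, SimpleGraph.boxProd_adj]
      simp only [SimpleGraph.top_adj]
      have := mt Prod.ext_iff.2 hne
      grind
    exact this
  have hu : u ∈ ({u} : Set _) := rfl
  rw [← h] at hu
  obtain ⟨hadj, hu⟩ := hu
  rw [SimpleGraph.mem_neighborSet, SimpleGraph.boxProd_adj] at hadj
  simp only [SimpleGraph.top_adj] at hadj
  rcases hadj with ⟨h1, h2⟩ | ⟨h1, h2⟩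
  · refine Or.inr ⟨fun w hw e => key w hw (Or.inr (e.trans h2.symm)), v.1, fun w hw e => h1 ?_⟩
    rw [← key w hw (Or.inl e), e]
  · refine Or.inl ⟨fun w hw e => key w hw (Or.inl (e.trans h2.symm)), v.2, fun w hw e => h1 ?_⟩
    rw [← key w hw (Or.inr e), e]

/-- The extremal complement: the cells of row `1` and of column `1` whose other coordinate
is at least `2`, so that row `0` and column `0` stay free for the private neighbours. -/
def hook (n n' : ℕ) : Set (Fin n × Fin n') :=
  {p | (p.1.val = 1 ∧ 2 ≤ p.2.val) ∨ (p.2.val = 1 ∧ 2 ≤ p.1.val)}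

lemma isSuperDominatingSet_compl_hook {n n' : ℕ} (hn : 4 ≤ n) (hn' : 4 ≤ n') :
    IsSuperDominatingSet ((⊤ : SimpleGraph (Fin n)) □ (⊤ : SimpleGraph (Fin n')))
      (hook n n')ᶜ := by
  intro u hu
  rw [compl_compl] at hu ⊢
  rcases u with ⟨a, b⟩
  rcases hu with hu | hu
  · refine ⟨(⟨0, by omega⟩, b), ?_, ?_⟩
    · simp only [hook, Set.mem_compl_iff, Set.mem_ofPred_eq] at hu ⊢
      omega
    · ext ⟨x, y⟩
      simp only [hook, Set.mem_inter_iff, SimpleGraph.mem_neighborSet, SimpleGraph.boxProd_adj,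
        SimpleGraph.top_adj, Set.mem_ofPred_eq, Set.mem_singleton_iff, Prod.mk.injEq, Fin.ext_iff,
        ne_eq] at hu ⊢
      omega
  · refine ⟨(a, ⟨0, by omega⟩), ?_, ?_⟩
    · simp only [hook, Set.mem_compl_iff, Set.mem_ofPred_eq] at hu ⊢
      omega
    · ext ⟨x, y⟩
      simp only [hook, Set.mem_inter_iff, SimpleGraph.mem_neighborSet, SimpleGraph.boxProd_adj,
        SimpleGraph.top_adj, Set.mem_ofPred_eq, Set.mem_singleton_iff, Prod.mk.injEq, Fin.ext_iff,
        ne_eq] at hu ⊢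
      omega

lemma ncard_hook {n n' : ℕ} (hn : 4 ≤ n) (hn' : 4 ≤ n') :
    (hook n n').ncard = (n' - 2) + (n - 2) := by
  classical
  have e : hook n n' = ↑(({⟨1, by omega⟩} ×ˢ Finset.Ici ⟨2, by omega⟩ ∪
      Finset.Ici ⟨2, by omega⟩ ×ˢ {⟨1, by omega⟩}) : Finset (Fin n × Fin n')) := by
    ext ⟨x, y⟩
    simp only [hook, Set.mem_ofPred_eq, Finset.mem_coe, Finset.mem_union, Finset.mem_product,
      Finset.mem_singleton, Finset.mem_Ici, Fin.ext_iff, Fin.le_def]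
    omega
  rw [e, Set.ncard_coe_finset, Finset.card_union_of_disjoint]
  · simp
  · rw [Finset.disjoint_left]
    rintro ⟨x, y⟩
    simp only [Finset.mem_product, Finset.mem_singleton, Finset.mem_Ici, Fin.ext_iff, Fin.le_def]
    omega

theorem superDomNum_completeBoxComplete (n n' : ℕ) (hn : 4 ≤ n) (hn' : 4 ≤ n') :
    superDomNum ((⊤ : SimpleGraph (Fin n)) □ (⊤ : SimpleGraph (Fin n'))) =
      n * n' - n - n' + 4 := by
  classical
  -- Ensures that the natural subtractions in the statement do not truncate.
  have hmul : n + n' ≤ n * n' := by nlinarith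
  have hcompl : ∀ D : Set (Fin n × Fin n'), D.ncard + Dᶜ.ncard = n * n' := fun D => by
    simpa using Set.ncard_add_ncard_compl D
  have hmem : ∃ D : Set (Fin n × Fin n'), IsSuperDominatingSet
      ((⊤ : SimpleGraph (Fin n)) □ (⊤ : SimpleGraph (Fin n'))) D ∧
      D.ncard = n * n' - n - n' + 4 := by
    refine ⟨(hook n n')ᶜ, isSuperDominatingSet_compl_hook hn hn', ?_⟩
    have h1 := hcompl (hook n n')
    have h2 := ncard_hook hn hn'
    omega
  refine le_antisymm (Nat.sInf_le hmem) (le_csInf ⟨_, hmem⟩ ?_)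
  rintro k ⟨D, hD, rfl⟩
  have hle := card_add_four_le hn hn' Dᶜ.toFinset fun u hu => by
    obtain ⟨v, hv, h⟩ := hD u (Set.mem_toFinset.1 hu)
    simpa only [Set.mem_toFinset] using alone_of_private (Set.notMem_compl_iff.2 hv) h
  rw [← Set.ncard_eq_toFinset_card'] at hle
  have := hcompl D
  omega
end
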